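/- There exist a constant c > 0 and N ∈ ℕ such that for every n ≥ N there is a spatial hypergraph H = (V, {r, b}) with |V| = n, r ∪ b = V and r ∩ b ≠ ∅ with the following properties: H admits a plane support tree, and every plane support tree of H has total length at least c · n · L, where L is the minimum total length over all (not necessarily plane) support trees of H. -/

import Mathlib

noncomputable section

/-- Points in the Euclidean plane. -/
abbrev Pt : Type := EuclideanSpace ℝ (Fin 2)

noncomputable instance : DecidableEq Pt := Classical.decEq _

/-- Length of an edge (an unordered pair of points): the Euclidean distance
between its endpoints. -/
def edgeLen : Sym2 Pt → ℝ := Sym2.lift ⟨fun u v => dist u v, fun u v => dist_comm u v⟩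

/-- Total length of a graph given by its finite edge set: the sum of the Euclidean
lengths of its edges. -/
def graphLength (E : Finset (Sym2 Pt)) : ℝ := ∑ e ∈ E, edgeLen e

/-- Closed straight-line segment joining the endpoints of an edge. -/
def edgeSeg : Sym2 Pt → Set Pt :=
  Sym2.lift ⟨fun u v => segment ℝ u v, fun u v => segment_symm ℝ u v⟩

/-- The edges in `E` are unordered pairs of distinct points of `V`. -/
def EdgesOn (V : Finset Pt) (E : Finset (Sym2 Pt)) : Prop :=
  ∀ e ∈ E, ¬ e.IsDiag ∧ ∀ p ∈ e, p ∈ V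

/-- The subgraph induced by `s` of the graph with edge set `E` is connected. -/
def InducedConnected (E : Finset (Sym2 Pt)) (s : Finset Pt) : Prop :=
  ((SimpleGraph.fromEdgeSet (↑E : Set (Sym2 Pt))).induce (↑s : Set Pt)).Connected

/-- The graph with edge set `E` is a tree (connected and acyclic) on vertex set `V`. -/
def IsTreeOn (V : Finset Pt) (E : Finset (Sym2 Pt)) : Prop :=
  ((SimpleGraph.fromEdgeSet (↑E : Set (Sym2 Pt))).induce (↑V : Set Pt)).IsTree

/-- The straight-line drawing of the graph with edge set `E` is plane: the closed
straight-line segments of any two distinct edges intersect only in points that are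
endpoints of both edges. -/
def IsPlane (E : Finset (Sym2 Pt)) : Prop :=
  ∀ e ∈ E, ∀ f ∈ E, e ≠ f → ∀ x ∈ edgeSeg e ∩ edgeSeg f, x ∈ e ∧ x ∈ f

/-- `T` is a Euclidean minimum spanning tree of the point set `P`: a spanning tree of
the complete graph on `P` minimizing the total Euclidean edge length. -/
def IsEMST (P : Finset Pt) (T : Finset (Sym2 Pt)) : Prop :=
  EdgesOn P T ∧ IsTreeOn P T ∧
    ∀ T' : Finset (Sym2 Pt), EdgesOn P T' → IsTreeOn P T' → graphLength T ≤ graphLength T'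

/-!
Place an apex at distance one from a line carrying closely spaced points colored alternately red
and blue, and give the apex both colors. An edge between two points of equal color on the line
passes through a point of the other color, at which some edge of any support tree ends, so in a
plane support tree every point of the line is joined to the apex by an edge of length at least one.
Without planarity, two chains along the line, one in each color, cost almost nothing beyond the
two edges that attach them to the apex.
-/

theorem edgeLen_nonneg (e : Sym2 Pt) : 0 ≤ edgeLen e := by
  induction e with
  | _ x y => exact dist_nonneg (x := x)

theorem graphLength_mono {E F : Finset (Sym2 Pt)} (h : E ⊆ F) : graphLength E ≤ graphLength F :=
  Finset.sum_le_sum_of_subset_of_nonneg h fun e _ _ => edgeLen_nonneg e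

section Connectivity

variable {E : Finset (Sym2 Pt)} {V s : Finset Pt}

theorem InducedConnected.exists_edge (h : InducedConnected E s) (hs : s.Nontrivial) {x : Pt}
    (hx : x ∈ s) : ∃ y ∈ s, y ≠ x ∧ s(x, y) ∈ E := by
  have : Nontrivial (s : Set Pt) := Set.nontrivial_coe_sort.2 hs
  obtain ⟨⟨y, hy⟩, hxy⟩ := h.preconnected.exists_adj_of_nontrivial ⟨x, hx⟩
  obtain ⟨hmem, hne⟩ := (SimpleGraph.fromEdgeSet_adj _).1 hxy
  exact ⟨y, hy, hne.symm, hmem⟩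

theorem InducedConnected.isTreeOn_of_card_lt (h : InducedConnected E V) (hcard : E.card < V.card) :
    IsTreeOn V E := by
  refine SimpleGraph.isTree_iff_connected_and_card.2
    ⟨h, le_antisymm ?_ h.card_vert_le_card_edgeSet_add_one⟩
  calc _ ≤ Nat.card (SimpleGraph.fromEdgeSet (E : Set (Sym2 Pt))).edgeSet + 1 :=
        Nat.succ_le_succ <| Nat.card_le_card_of_injective _
          (SimpleGraph.Embedding.induce (V : Set Pt)).mapEdgeSet.injective
    _ ≤ Nat.card (E : Set (Sym2 Pt)) + 1 :=
        Nat.succ_le_succ <| Nat.card_mono E.finite_toSet (by simp [SimpleGraph.edgeSet_fromEdgeSet])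
    _ = E.card + 1 := by simp
    _ ≤ V.card := hcard
    _ = Nat.card (V : Set Pt) := by simp

end Connectivity

theorem IsPlane.mem_of_mem_edgeSeg {T : Finset (Sym2 Pt)} (hT : IsPlane T) {e f : Sym2 Pt}
    (he : e ∈ T) (hf : f ∈ T) {x : Pt} (hxf : x ∈ f) (hxe : x ∈ edgeSeg e) : x ∈ e := by
  have hxf' : x ∈ edgeSeg f := by
    obtain ⟨y, rfl⟩ := hxf
    exact left_mem_segment ℝ x y
  rcases eq_or_ne e f with rfl | hef
  · exact hxf
  · exact (hT e he f hf hef x ⟨hxe, hxf'⟩).1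

/-- `T` is a support tree of the spatial hypergraph with vertex set `V` and hyperedges `S`. -/
def IsSupportTree (V : Finset Pt) (S : Set (Finset Pt)) (T : Finset (Sym2 Pt)) : Prop :=
  EdgesOn V T ∧ IsTreeOn V T ∧ ∀ s ∈ S, InducedConnected T s

theorem isSupportTree_pair {V r b : Finset Pt} {T : Finset (Sym2 Pt)} :
    IsSupportTree V {r, b} T ↔
      EdgesOn V T ∧ IsTreeOn V T ∧ InducedConnected T r ∧ InducedConnected T b := by
  simp [IsSupportTree]

theorem IsSupportTree.exists_minimal_graphLength {V : Finset Pt} {S : Set (Finset Pt)}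
    {T : Finset (Sym2 Pt)} (hT : IsSupportTree V S T) :
    ∃ T₀, IsSupportTree V S T₀ ∧ ∀ T', IsSupportTree V S T' → graphLength T₀ ≤ graphLength T' := by
  have finite : {T' | IsSupportTree V S T'}.Finite :=
    V.sym2.powerset.finite_toSet.subset fun T' hT' => Finset.mem_coe.2 <|
      Finset.mem_powerset.2 fun e he => Finset.mem_sym2_iff.2 (hT'.1 e he).2
  exact Set.exists_min_image _ graphLength finite ⟨T, hT⟩

section ParentEdges

variable {v : ℕ → Pt} {π : ℕ → ℕ} {m : ℕ}

/-- The edges of the graph on `v 0, …, v m` with root `v 0` in which the parent of `v (i + 1)` is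
`v (π i)`. The indices are shifted because the root has no parent; `π i ≤ i` makes parents precede
their children. -/
def parentEdges (v : ℕ → Pt) (π : ℕ → ℕ) (m : ℕ) : Finset (Sym2 Pt) :=
  (Finset.range m).image fun i => s(v (i + 1), v (π i))

theorem inducedConnected_parentEdges (hv : v.Injective) (hπ : ∀ i, π i ≤ i) {I : Finset ℕ}
    (hIm : I ⊆ Finset.range (m + 1)) (h0 : 0 ∈ I) (hI : ∀ i, i + 1 ∈ I → π i ∈ I) :
    InducedConnected (parentEdges v π m) (I.image v) := by
  have mem {i : ℕ} (hi : i ∈ I) : v i ∈ (I.image v : Set Pt) :=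
    Finset.mem_coe.2 (Finset.mem_image_of_mem v hi)
  set G := (SimpleGraph.fromEdgeSet (parentEdges v π m : Set (Sym2 Pt))).induce (I.image v : Set Pt)
  have reachable_root (i : ℕ) (hi : i ∈ I) : G.Reachable ⟨v i, mem hi⟩ ⟨v 0, mem h0⟩ := by
    induction i using Nat.strong_induction_on with
    | _ i ih =>
      rcases i with - | i
      · exact .refl _
      · have him : i < m := by simpa using hIm hi
        have parent_lt : π i < i + 1 := Nat.lt_succ_of_le (hπ i)
        have adj : G.Adj ⟨v (i + 1), mem hi⟩ ⟨v (π i), mem (hI i hi)⟩ :=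
          (SimpleGraph.fromEdgeSet_adj _).2 ⟨Finset.mem_coe.2 <|
            Finset.mem_image_of_mem _ (Finset.mem_range.2 him), hv.ne parent_lt.ne'⟩
        exact adj.reachable.trans (ih (π i) parent_lt (hI i hi))
  refine SimpleGraph.connected_iff_exists_forall_reachable G |>.2 ⟨⟨v 0, mem h0⟩, ?_⟩
  rintro ⟨x, hx⟩
  obtain ⟨i, hi, rfl⟩ := Finset.mem_image.1 (Finset.mem_coe.1 hx)
  exact (reachable_root i hi).symm

theorem edgesOn_parentEdges (hv : v.Injective) (hπ : ∀ i, π i ≤ i) :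
    EdgesOn ((Finset.range (m + 1)).image v) (parentEdges v π m) := by
  intro e he
  obtain ⟨i, hi, rfl⟩ := Finset.mem_image.1 he
  have him : i < m := Finset.mem_range.1 hi
  have parent_lt : π i < i + 1 := Nat.lt_succ_of_le (hπ i)
  refine ⟨fun h => hv.ne parent_lt.ne' (Sym2.mk_isDiag_iff.1 h), fun x hx => ?_⟩
  rcases Sym2.mem_iff.1 hx with rfl | rfl <;>
    exact Finset.mem_image_of_mem v (Finset.mem_range.2 (by omega))

theorem isTreeOn_parentEdges (hv : v.Injective) (hπ : ∀ i, π i ≤ i) :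
    IsTreeOn ((Finset.range (m + 1)).image v) (parentEdges v π m) := by
  have connected : InducedConnected (parentEdges v π m) ((Finset.range (m + 1)).image v) :=
    inducedConnected_parentEdges hv hπ subset_rfl (by simp) fun i hi =>
      Finset.mem_range.2 <| (hπ i).trans_lt <| i.lt_succ_self.trans (Finset.mem_range.1 hi)
  refine connected.isTreeOn_of_card_lt ?_
  calc (parentEdges v π m).card ≤ (Finset.range m).card := Finset.card_image_le
    _ < (Finset.range (m + 1)).card := by simp
    _ = ((Finset.range (m + 1)).image v).card := (Finset.card_image_of_injective _ hv).symm

theorem isSupportTree_parentEdges (hv : v.Injective) (hπ : ∀ i, π i ≤ i) {S : Set (Finset Pt)}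
    (hS : ∀ s ∈ S, ∃ I ⊆ Finset.range (m + 1),
      0 ∈ I ∧ (∀ i, i + 1 ∈ I → π i ∈ I) ∧ I.image v = s) :
    IsSupportTree ((Finset.range (m + 1)).image v) S (parentEdges v π m) := by
  refine ⟨edgesOn_parentEdges hv hπ, isTreeOn_parentEdges hv hπ, fun s hs => ?_⟩
  obtain ⟨I, hIm, h0, hI, rfl⟩ := hS s hs
  exact inducedConnected_parentEdges hv hπ hIm h0 hI

theorem graphLength_parentEdges (hv : v.Injective) (hπ : ∀ i, π i ≤ i) :
    graphLength (parentEdges v π m) = ∑ i ∈ Finset.range m, dist (v (i + 1)) (v (π i)) := by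
  refine Finset.sum_image fun i _ j _ hij => ?_
  rcases Sym2.eq_iff.1 hij with ⟨h, -⟩ | ⟨h, h'⟩
  · exact Nat.succ_injective (hv h)
  · have := hv h
    have := hv h'
    have := hπ i
    have := hπ j
    omega

theorem isPlane_parentEdges_zero
    (hindep : Pairwise fun i j => LinearIndependent ℝ ![v (i + 1) - v 0, v (j + 1) - v 0]) :
    IsPlane (parentEdges v 0 m) := by
  intro e he f hf hef x hx
  obtain ⟨i, -, rfl⟩ := Finset.mem_image.1 he
  obtain ⟨j, -, rfl⟩ := Finset.mem_image.1 hf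
  have hij : i ≠ j := fun h => hef (by rw [h])
  have hx' : x ∈ segment ℝ (v 0) (v (i + 1)) ∩ segment ℝ (v 0) (v (j + 1)) := by
    rw [segment_symm ℝ (v 0), segment_symm ℝ (v 0)]
    exact hx
  rw [segment_inter_eq_endpoint_of_linearIndependent_sub ℝ (hindep hij)] at hx'
  obtain rfl : x = v 0 := hx'
  exact ⟨Sym2.mem_mk_right _ _, Sym2.mem_mk_right _ _⟩

end ParentEdges

section AlternatingColors

variable {v : ℕ → Pt} {m : ℕ}

/-- The indices in `{0, …, m}` of parity `a`, together with `0`, the index of the apex, which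
belongs to both colors. -/
def colorIndices (m a : ℕ) : Finset ℕ :=
  {i ∈ Finset.range (m + 1) | i = 0 ∨ i % 2 = a}

/-- One of the two hyperedges of the construction: the apex `v 0` and the points of color `a`,
where `v i` has color `i % 2`. -/
def colorClass (v : ℕ → Pt) (m a : ℕ) : Finset Pt :=
  (colorIndices m a).image v

theorem colorClass_union :
    colorClass v m 1 ∪ colorClass v m 0 = (Finset.range (m + 1)).image v := by
  rw [colorClass, colorClass, ← Finset.image_union]
  congr 1
  ext i
  simp only [colorIndices, Finset.mem_union, Finset.mem_filter]
  have := Nat.mod_two_eq_zero_or_one i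
  tauto

theorem root_mem_colorClass (a : ℕ) : v 0 ∈ colorClass v m a :=
  Finset.mem_image_of_mem v (by simp [colorIndices])

theorem isSupportTree_colorClass_parentEdges {π : ℕ → ℕ} (hv : v.Injective) (hπ : ∀ i, π i ≤ i)
    (hcolor : ∀ i, π i = 0 ∨ π i % 2 = (i + 1) % 2) :
    IsSupportTree ((Finset.range (m + 1)).image v) {colorClass v m 1, colorClass v m 0}
      (parentEdges v π m) := by
  have closed (a i : ℕ) (hi : i + 1 ∈ colorIndices m a) : π i ∈ colorIndices m a := by
    simp only [colorIndices, Finset.mem_filter, Finset.mem_range] at hi ⊢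
    have := hπ i
    have := hcolor i
    omega
  have admissible (a : ℕ) : ∃ I ⊆ Finset.range (m + 1),
      0 ∈ I ∧ (∀ i, i + 1 ∈ I → π i ∈ I) ∧ I.image v = colorClass v m a :=
    ⟨colorIndices m a, Finset.filter_subset _ _, by simp [colorIndices], closed a, rfl⟩
  refine isSupportTree_parentEdges hv hπ ?_
  rintro s (rfl | rfl)
  exacts [admissible 1, admissible 0]

section Forced

variable {T : Finset (Sym2 Pt)}

theorem exists_edge_of_inducedConnected_colorClass (hv : v.Injective)
    (hconn : ∀ a < 2, InducedConnected T (colorClass v m a)) {i : ℕ} (hi : i < m) :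
    ∃ j ≤ m, j ≠ i + 1 ∧ (j = 0 ∨ j % 2 = (i + 1) % 2) ∧ s(v (i + 1), v j) ∈ T := by
  have hmem : v (i + 1) ∈ colorClass v m ((i + 1) % 2) :=
    Finset.mem_image_of_mem v (by simp [colorIndices, hi])
  have nontrivial : (colorClass v m ((i + 1) % 2)).Nontrivial :=
    ⟨_, hmem, _, root_mem_colorClass _, hv.ne i.succ_ne_zero⟩
  obtain ⟨y, hy, hne, hedge⟩ :=
    (hconn _ (Nat.mod_lt _ two_pos)).exists_edge nontrivial hmem
  obtain ⟨j, hj, rfl⟩ := Finset.mem_image.1 hy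
  obtain ⟨hjm, hcolor⟩ := Finset.mem_filter.1 hj
  exact ⟨j, Nat.lt_succ_iff.1 (Finset.mem_range.1 hjm), fun h => hne (by rw [h]), hcolor, hedge⟩

theorem IsPlane.notMem_of_lt_of_lt (hT : IsPlane T) (hv : v.Injective)
    (hconn : ∀ a < 2, InducedConnected T (colorClass v m a)) {i k j : ℕ}
    (hik : i < k) (hkj : k < j) (hkm : k < m)
    (hbtw : v (k + 1) ∈ segment ℝ (v (i + 1)) (v (j + 1))) : s(v (i + 1), v (j + 1)) ∉ T := by
  intro hij
  obtain ⟨l, -, -, -, hkl⟩ := exists_edge_of_inducedConnected_colorClass hv hconn hkm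
  rcases Sym2.mem_iff.1 (hT.mem_of_mem_edgeSeg hij hkl (Sym2.mem_mk_left _ _) hbtw) with h | h
  · have := hv h
    omega
  · have := hv h
    omega

theorem IsPlane.parentEdges_zero_subset (hT : IsPlane T) (hv : v.Injective)
    (hconn : ∀ a < 2, InducedConnected T (colorClass v m a))
    (hbtw : ∀ i k j, i < k → k < j → v (k + 1) ∈ segment ℝ (v (i + 1)) (v (j + 1))) :
    parentEdges v 0 m ⊆ T := by
  have no_chord {i j : ℕ} (hij : i + 1 < j) (hj : j < m) : s(v (i + 1), v (j + 1)) ∉ T :=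
    hT.notMem_of_lt_of_lt hv hconn i.lt_succ_self hij (by omega)
      (hbtw i (i + 1) j i.lt_succ_self hij)
  intro e he
  obtain ⟨i, hi, rfl⟩ := Finset.mem_image.1 he
  have him : i < m := Finset.mem_range.1 hi
  obtain ⟨j, hjm, hji, hcolor, hedge⟩ := exists_edge_of_inducedConnected_colorClass hv hconn him
  rcases j with - | j
  · exact hedge
  · rcases lt_or_ge i j with h | h
    · exact absurd hedge (no_chord (by omega) (by omega))
    · exact absurd (Sym2.eq_swap ▸ hedge) (no_chord (i := j) (by omega) him)

end Forced

end AlternatingColors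

section Fan

variable {δ : ℝ}

/-- The vertices of the construction: the apex `0`, followed by points on the line at height `1`
with spacing `δ`. -/
def fanPoint (δ : ℝ) : ℕ → Pt
  | 0 => 0
  | i + 1 => !₂[i * δ, 1]

theorem fanPoint_injective (hδ : δ ≠ 0) : (fanPoint δ).Injective := by
  rintro (- | i) (- | j) h
  · rfl
  · simpa [fanPoint] using congrArg (· 1) h
  · simpa [fanPoint] using congrArg (· 1) h
  · simpa [fanPoint, hδ] using congrArg (· 0) h

theorem dist_fanPoint_succ_zero (i : ℕ) :
    dist (fanPoint δ (i + 1)) (fanPoint δ 0) = √((i * δ) ^ 2 + 1) := by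
  simp [fanPoint, EuclideanSpace.norm_eq, Fin.sum_univ_two]

theorem dist_fanPoint_succ_succ (i j : ℕ) :
    dist (fanPoint δ (i + 1)) (fanPoint δ (j + 1)) = |i * δ - j * δ| := by
  simp [fanPoint, EuclideanSpace.dist_eq, Fin.sum_univ_two, Real.dist_eq, Real.sqrt_sq_eq_abs]

theorem fanPoint_mem_segment {i k j : ℕ} (hik : i < k) (hkj : k < j) :
    fanPoint δ (k + 1) ∈ segment ℝ (fanPoint δ (i + 1)) (fanPoint δ (j + 1)) := by
  have hik' : (i : ℝ) < k := Nat.cast_lt.2 hik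
  have hkj' : (k : ℝ) < j := Nat.cast_lt.2 hkj
  have hij : (0 : ℝ) < j - i := by linarith
  refine ⟨(j - k) / (j - i), (k - i) / (j - i), div_nonneg (by linarith) hij.le,
    div_nonneg (by linarith) hij.le, by field_simp; ring, ?_⟩
  ext t
  fin_cases t <;> simp [fanPoint] <;> field_simp <;> ring

theorem linearIndependent_fanPoint_sub (hδ : δ ≠ 0) :
    Pairwise fun i j => LinearIndependent ℝ
      ![fanPoint δ (i + 1) - fanPoint δ 0, fanPoint δ (j + 1) - fanPoint δ 0] := by
  intro i j hij
  refine LinearIndependent.pair_iff.2 fun s t h => ?_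
  have hx : s * (i * δ) + t * (j * δ) = 0 := by simpa [fanPoint] using congrArg (· 0) h
  have hy : s + t = 0 := by simpa [fanPoint] using congrArg (· 1) h
  have hts : t = -s := by linarith
  have hs : s * ((i - j) * δ) = 0 := by rw [hts] at hx; linarith
  have hs0 : s = 0 := by simpa [sub_ne_zero.2 (Nat.cast_injective.ne hij), hδ] using hs
  exact ⟨hs0, by rw [hts, hs0, neg_zero]⟩

theorem le_graphLength_fanPoint_star (hδ : δ ≠ 0) (m : ℕ) :
    m ≤ graphLength (parentEdges (fanPoint δ) 0 m) := by
  rw [graphLength_parentEdges (π := 0) (fanPoint_injective hδ) Nat.zero_le]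
  calc (m : ℝ) = ∑ i ∈ Finset.range m, 1 := by simp
    _ ≤ ∑ i ∈ Finset.range m, dist (fanPoint δ (i + 1)) (fanPoint δ 0) :=
      Finset.sum_le_sum fun i _ => by
        rw [dist_fanPoint_succ_zero, Real.one_le_sqrt]
        linarith [sq_nonneg (i * δ)]

theorem IsPlane.le_graphLength_of_fanPoint {T : Finset (Sym2 Pt)} {m : ℕ} (hT : IsPlane T)
    (hδ : δ ≠ 0) (hconn : ∀ a < 2, InducedConnected T (colorClass (fanPoint δ) m a)) :
    m ≤ graphLength T :=
  (le_graphLength_fanPoint_star hδ m).trans <| graphLength_mono <|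
    hT.parentEdges_zero_subset (fanPoint_injective hδ) hconn fun _ _ _ => fanPoint_mem_segment

/-- Since `Nat.pred 0 = 0`, the parent function `Nat.pred` attaches the first two points of the
line to the apex and every later one to the point two places before it. -/
theorem graphLength_fanPoint_chains_le (hδ : 0 < δ) (k : ℕ) :
    graphLength (parentEdges (fanPoint δ) Nat.pred (k + 2)) ≤ 2 + (2 * k + 1) * δ := by
  have chain_edge (i : ℕ) : dist (fanPoint δ (i + 3)) (fanPoint δ (i + 1)) = 2 * δ := by
    rw [dist_fanPoint_succ_succ (i + 2) i, ← sub_mul, abs_of_nonneg (by push_cast; nlinarith)]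
    push_cast
    ring
  have first_edge : dist (fanPoint δ 1) (fanPoint δ 0) = 1 := by
    simp [dist_fanPoint_succ_zero 0]
  have second_edge : dist (fanPoint δ 2) (fanPoint δ 0) ≤ 1 + δ := by
    rw [dist_fanPoint_succ_zero 1]
    exact Real.sqrt_le_iff.2 ⟨by positivity, by push_cast; nlinarith⟩
  rw [graphLength_parentEdges (fanPoint_injective hδ.ne') Nat.pred_le,
    Finset.sum_range_succ', Finset.sum_range_succ']
  calc ∑ i ∈ Finset.range k, dist (fanPoint δ (i + 3)) (fanPoint δ (i + 1))
          + dist (fanPoint δ 2) (fanPoint δ 0) + dist (fanPoint δ 1) (fanPoint δ 0)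
      ≤ k * (2 * δ) + (1 + δ) + 1 := by
        simp only [chain_edge, first_edge, Finset.sum_const, Finset.card_range, nsmul_eq_mul]
        gcongr
    _ = 2 + (2 * k + 1) * δ := by ring

end Fan

/-- There are `c > 0` and `N` such that for every `n ≥ N` there is a
spatial hypergraph `(V, {r, b})` with `|V| = n`, `r ∪ b = V` and `r ∩ b ≠ ∅` that admits
a plane support tree, and such that every plane support tree has length at least
`c * n * graphLength T₀`, where `T₀` is a minimum-length (not necessarily plane)
support tree. -/
theorem plane_support_tree_not_constant_approx :
    ∃ c : ℝ, 0 < c ∧ ∃ N : ℕ, ∀ n : ℕ, N ≤ n →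
      ∃ (V r b : Finset Pt), V.card = n ∧ r ∪ b = V ∧ (r ∩ b).Nonempty ∧
        -- `H` admits a plane support tree:
        (∃ E : Finset (Sym2 Pt), EdgesOn V E ∧ IsTreeOn V E ∧
          InducedConnected E r ∧ InducedConnected E b ∧ IsPlane E) ∧
        ∃ T₀ : Finset (Sym2 Pt),
          -- `T₀` is a (not necessarily plane) support tree ...
          (EdgesOn V T₀ ∧ IsTreeOn V T₀ ∧ InducedConnected T₀ r ∧ InducedConnected T₀ b) ∧
          -- ... of minimum total length among all support trees, and
          (∀ T : Finset (Sym2 Pt), EdgesOn V T → IsTreeOn V T →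
            InducedConnected T r → InducedConnected T b →
            graphLength T₀ ≤ graphLength T) ∧
          -- every plane support tree is long:
          (∀ T : Finset (Sym2 Pt), EdgesOn V T → IsTreeOn V T →
            InducedConnected T r → InducedConnected T b → IsPlane T →
            c * (n : ℝ) * graphLength T₀ ≤ graphLength T) := by
  refine ⟨1 / 6, by norm_num, 3, fun n hn => ?_⟩
  obtain ⟨k, rfl⟩ := Nat.exists_eq_add_of_le' hn
  obtain ⟨δ, hδ, hkδ⟩ : ∃ δ : ℝ, 0 < δ ∧ (k + 1) * δ = 1 :=
    ⟨1 / (k + 1), by positivity, by field_simp⟩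
  have hv := fanPoint_injective hδ.ne'
  obtain ⟨hE, htree, hr, hb⟩ := isSupportTree_pair.1 <|
    isSupportTree_colorClass_parentEdges (m := k + 2) (π := 0) hv Nat.zero_le fun _ => .inl rfl
  have chains := isSupportTree_colorClass_parentEdges (m := k + 2) hv Nat.pred_le
    fun i => by rw [Nat.pred_eq_sub_one]; omega
  obtain ⟨T₀, hT₀, hmin⟩ := chains.exists_minimal_graphLength
  have short : graphLength T₀ ≤ 4 := by
    linarith [hmin _ chains, graphLength_fanPoint_chains_le hδ k]
  refine ⟨_, _, _, by simp [Finset.card_image_of_injective _ hv], colorClass_union,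
    ⟨_, Finset.mem_inter.2 ⟨root_mem_colorClass 1, root_mem_colorClass 0⟩⟩,
    ⟨_, hE, htree, hr, hb, isPlane_parentEdges_zero (linearIndependent_fanPoint_sub hδ.ne')⟩,
    T₀, isSupportTree_pair.1 hT₀,
    fun T hE htree hr hb => hmin T (isSupportTree_pair.2 ⟨hE, htree, hr, hb⟩),
    fun T _ _ hr hb hplane => ?_⟩
  have long := hplane.le_graphLength_of_fanPoint hδ.ne' (m := k + 2) fun
    | 0, _ => hb
    | 1, _ => hr
  calc 1 / 6 * ((k + 3 : ℕ) : ℝ) * graphLength T₀ ≤ 1 / 6 * (k + 3 : ℕ) * 4 := by gcongr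
    _ ≤ (k + 2 : ℕ) := by push_cast; linarith [k.cast_nonneg (α := ℝ)]
    _ ≤ graphLength T := long
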